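/- (Proposition 5, conserved quantity under the differential constraint.) Let ε = ±1, let Ω ⊆ ℂ be open, and let (ψ₁, ψ₂) be a pair of continuously real-differentiable complex-valued functions solving the generalized Weierstrass–Enneper system ∂ψ₁ = p ψ₂, ∂̄ψ₂ = −p ψ₁ on Ω, where p = |ψ₁|² + |ψ₂|². If the first-order differential constraint ψ₁ ∂ψ̄₁ − ε ψ̄₁ ∂̄ψ₁ + ψ̄₂ ∂ψ₂ − ε ψ₂ ∂̄ψ̄₂ = 0 holds on Ω, then ∂p − ε ∂̄p = 0 on Ω; consequently p is a function of the single real variable s = z + ε z̄ alone (for ε = 1 it is independent of Im z, and for ε = −1 it is independent of Re z, along segments contained in Ω). -/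

import Mathlib

open Complex

/-- The Wirtinger derivative ∂f = (1/2)(∂f/∂x − i ∂f/∂y) of a real-differentiable
function `f : ℂ → ℂ`. -/
noncomputable def wD (f : ℂ → ℂ) (z : ℂ) : ℂ :=
  (1 / 2 : ℂ) * (fderiv ℝ f z 1 - Complex.I * fderiv ℝ f z Complex.I)

/-- The conjugate Wirtinger derivative ∂̄f = (1/2)(∂f/∂x + i ∂f/∂y). -/
noncomputable def wDbar (f : ℂ → ℂ) (z : ℂ) : ℂ :=
  (1 / 2 : ℂ) * (fderiv ℝ f z 1 + Complex.I * fderiv ℝ f z Complex.I)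

lemma wD_conj {f : ℂ → ℂ} {z : ℂ} (hf : DifferentiableAt ℝ f z) :
    wD (fun u => (starRingEnd ℂ) (f u)) z = (starRingEnd ℂ) (wDbar f z) := by
  have h := (conjCLE.toContinuousLinearMap.hasFDerivAt.comp z hf.hasFDerivAt).fderiv
  change fderiv ℝ (fun u => (starRingEnd ℂ) (f u)) z = _ at h
  simp [wD, wDbar, h, sub_eq_add_neg, map_ofNat (starRingEnd ℂ) 2]

lemma wDbar_conj {f : ℂ → ℂ} {z : ℂ} (hf : DifferentiableAt ℝ f z) :
    wDbar (fun u => (starRingEnd ℂ) (f u)) z = (starRingEnd ℂ) (wD f z) := by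
  have h := (conjCLE.toContinuousLinearMap.hasFDerivAt.comp z hf.hasFDerivAt).fderiv
  change fderiv ℝ (fun u => (starRingEnd ℂ) (f u)) z = _ at h
  simp [wD, wDbar, h, map_ofNat (starRingEnd ℂ) 2]

lemma wD_add {f g : ℂ → ℂ} {z : ℂ} (hf : DifferentiableAt ℝ f z)
    (hg : DifferentiableAt ℝ g z) :
    wD (fun u => f u + g u) z = wD f z + wD g z := by
  simp only [wD, fderiv_fun_add hf hg, add_apply]
  ring

lemma wDbar_add {f g : ℂ → ℂ} {z : ℂ} (hf : DifferentiableAt ℝ f z)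
    (hg : DifferentiableAt ℝ g z) :
    wDbar (fun u => f u + g u) z = wDbar f z + wDbar g z := by
  simp only [wDbar, fderiv_fun_add hf hg, add_apply]
  ring

lemma wD_mul {f g : ℂ → ℂ} {z : ℂ} (hf : DifferentiableAt ℝ f z)
    (hg : DifferentiableAt ℝ g z) :
    wD (fun u => f u * g u) z = f z * wD g z + g z * wD f z := by
  simp only [wD, fderiv_fun_mul hf hg, add_apply, smul_apply, smul_eq_mul]
  ring

lemma wDbar_mul {f g : ℂ → ℂ} {z : ℂ} (hf : DifferentiableAt ℝ f z)
    (hg : DifferentiableAt ℝ g z) :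
    wDbar (fun u => f u * g u) z = f z * wDbar g z + g z * wDbar f z := by
  simp only [wDbar, fderiv_fun_mul hf hg, add_apply, smul_apply, smul_eq_mul]
  ring

/-- The real derivative in terms of the Wirtinger derivatives: `df = ∂f dz + ∂̄f dz̄`. -/
lemma fderiv_apply_eq_wD_add_wDbar (f : ℂ → ℂ) (z d : ℂ) :
    fderiv ℝ f z d = wD f z * d + wDbar f z * (starRingEnd ℂ) d := by
  have hd : d = d.re • (1 : ℂ) + d.im • I := by simp [re_add_im]
  have hc : (starRingEnd ℂ) d = d.re - d.im * I := by
    apply Complex.ext <;> simp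
  have h : fderiv ℝ f z d = d.re * fderiv ℝ f z 1 + d.im * fderiv ℝ f z I := by
    conv_lhs => rw [hd]
    rw [map_add, map_smul, map_smul, real_smul, real_smul]
  rw [h, hc]
  conv_rhs => rw [← re_add_im d]
  simp only [wD, wDbar, add_re, add_im, ofReal_re, ofReal_im, mul_re, mul_im, I_re, I_im]
  push_cast
  linear_combination (d.im * fderiv ℝ f z I) * I_sq

/-- A function with `∂f = ε ∂̄f` takes equal values at the ends of a segment on which
`z + ε z̄` is constant. -/
lemma eq_of_wD_eq_mul_wDbar {ε : ℂ} (hε : ε * ε = 1) {f : ℂ → ℂ} {z w : ℂ}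
    (hf : ∀ x ∈ segment ℝ z w, DifferentiableAt ℝ f x)
    (h : ∀ x ∈ segment ℝ z w, wD f x - ε * wDbar f x = 0)
    (hzw : z + ε * (starRingEnd ℂ) z = w + ε * (starRingEnd ℂ) w) : f z = f w := by
  have hderiv : ∀ t ∈ Set.Icc (0 : ℝ) 1,
      HasDerivAt (fun t => f (AffineMap.lineMap z w t)) 0 t := by
    intro t ht
    have hx : AffineMap.lineMap z w t ∈ segment ℝ z w := by
      rw [segment_eq_image_lineMap]
      exact Set.mem_image_of_mem _ ht
    have hzero : fderiv ℝ f (AffineMap.lineMap z w t) (w - z) = 0 := by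
      rw [fderiv_apply_eq_wD_add_wDbar, map_sub]
      set a := wD f (AffineMap.lineMap z w t)
      set b := wDbar f (AffineMap.lineMap z w t)
      have hab : a - ε * b = 0 := h _ hx
      linear_combination (w - z) * hab - ε * b * hzw
        - b * ((starRingEnd ℂ) w - (starRingEnd ℂ) z) * hε
    rw [← hzero]
    exact (hf _ hx).hasFDerivAt.comp_hasDerivAt t AffineMap.hasDerivAt_lineMap
  have hconst := constant_of_has_deriv_right_zero
    (fun t ht => (hderiv t ht).continuousAt.continuousWithinAt)
    (fun t ht => (hderiv t (Set.Ico_subset_Icc_self ht)).hasDerivWithinAt) 1 (by simp)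
  simpa using hconst.symm

/-- Proposition 5, conserved quantity: let ε = ±1 and let (ψ₁, ψ₂) be a
C¹ solution of the Weierstrass–Enneper system on the open set Ω satisfying the
differential constraint ψ₁ ∂ψ̄₁ − ε ψ̄₁ ∂̄ψ₁ + ψ̄₂ ∂ψ₂ − ε ψ₂ ∂̄ψ̄₂ = 0. Then
∂p − ε ∂̄p = 0 on Ω, where p = |ψ₁|² + |ψ₂|²; consequently p depends only on
s = z + ε z̄ along segments contained in Ω. -/
theorem WE_constraint_conserved_p
    (ε : ℝ) (hε : ε = 1 ∨ ε = -1)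
    (Ω : Set ℂ) (hΩ : IsOpen Ω) (ψ₁ ψ₂ : ℂ → ℂ)
    (hψ₁ : ContDiffOn ℝ 1 ψ₁ Ω) (hψ₂ : ContDiffOn ℝ 1 ψ₂ Ω)
    (hWE₁ : ∀ z ∈ Ω, wD ψ₁ z =
      ((Complex.normSq (ψ₁ z) + Complex.normSq (ψ₂ z) : ℝ) : ℂ) * ψ₂ z)
    (hWE₂ : ∀ z ∈ Ω, wDbar ψ₂ z =
      -((Complex.normSq (ψ₁ z) + Complex.normSq (ψ₂ z) : ℝ) : ℂ) * ψ₁ z)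
    (hconstraint : ∀ z ∈ Ω,
      ψ₁ z * wD (fun u => (starRingEnd ℂ) (ψ₁ u)) z
        - (ε : ℂ) * (starRingEnd ℂ) (ψ₁ z) * wDbar ψ₁ z
        + (starRingEnd ℂ) (ψ₂ z) * wD ψ₂ z
        - (ε : ℂ) * ψ₂ z * wDbar (fun u => (starRingEnd ℂ) (ψ₂ u)) z = 0) :
    (∀ z ∈ Ω,
      wD (fun w => ((Complex.normSq (ψ₁ w) + Complex.normSq (ψ₂ w) : ℝ) : ℂ)) z
        - (ε : ℂ) * wDbar (fun w => ((Complex.normSq (ψ₁ w) + Complex.normSq (ψ₂ w) : ℝ) : ℂ)) z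
        = 0) ∧
    (∀ z ∈ Ω, ∀ w ∈ Ω, segment ℝ z w ⊆ Ω →
      z + (ε : ℂ) * (starRingEnd ℂ) z = w + (ε : ℂ) * (starRingEnd ℂ) w →
      Complex.normSq (ψ₁ z) + Complex.normSq (ψ₂ z)
        = Complex.normSq (ψ₁ w) + Complex.normSq (ψ₂ w)) := by
  have hd₁ : ∀ z ∈ Ω, DifferentiableAt ℝ ψ₁ z := fun z hz =>
    (hψ₁.differentiableOn one_ne_zero).differentiableAt (hΩ.mem_nhds hz)
  have hd₂ : ∀ z ∈ Ω, DifferentiableAt ℝ ψ₂ z := fun z hz =>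
    (hψ₂.differentiableOn one_ne_zero).differentiableAt (hΩ.mem_nhds hz)
  have hconj : ∀ {f : ℂ → ℂ} {z : ℂ}, DifferentiableAt ℝ f z →
      DifferentiableAt ℝ (fun u => (starRingEnd ℂ) (f u)) z := fun hf =>
    conjCLE.toContinuousLinearMap.differentiableAt.comp _ hf
  have hp : (fun w => ((normSq (ψ₁ w) + normSq (ψ₂ w) : ℝ) : ℂ)) =
      fun w => ψ₁ w * (starRingEnd ℂ) (ψ₁ w) + ψ₂ w * (starRingEnd ℂ) (ψ₂ w) := by
    funext w
    simp only [mul_conj, ofReal_add]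
  have hmain : ∀ z ∈ Ω,
      wD (fun w => ((normSq (ψ₁ w) + normSq (ψ₂ w) : ℝ) : ℂ)) z
        - (ε : ℂ) * wDbar (fun w => ((normSq (ψ₁ w) + normSq (ψ₂ w) : ℝ) : ℂ)) z = 0 := by
    intro z hz
    have h₁ := hd₁ z hz
    have h₂ := hd₂ z hz
    have hc₁ := hconj h₁
    have hc₂ := hconj h₂
    have hC := hconstraint z hz
    rw [hp, wD_add (h₁.fun_mul hc₁) (h₂.fun_mul hc₂), wDbar_add (h₁.fun_mul hc₁) (h₂.fun_mul hc₂),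
      wD_mul h₁ hc₁, wD_mul h₂ hc₂, wDbar_mul h₁ hc₁, wDbar_mul h₂ hc₂]
    rw [wDbar_conj h₁, wD_conj h₂, hWE₁ z hz, hWE₂ z hz]
    simp only [map_mul, map_neg, conj_ofReal]
    linear_combination hC
  refine ⟨hmain, fun z _ w _ hzw hs => ?_⟩
  have hεε : (ε : ℂ) * ε = 1 := by rcases hε with rfl | rfl <;> simp
  have hdiff : ∀ x ∈ segment ℝ z w,
      DifferentiableAt ℝ (fun w => ((normSq (ψ₁ w) + normSq (ψ₂ w) : ℝ) : ℂ)) x := by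
    intro x hx
    have h₁ := hd₁ x (hzw hx)
    have h₂ := hd₂ x (hzw hx)
    rw [hp]
    exact (h₁.fun_mul (hconj h₁)).fun_add (h₂.fun_mul (hconj h₂))
  exact ofReal_injective (eq_of_wD_eq_mul_wDbar hεε hdiff (fun x hx => hmain x (hzw hx)) hs)
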